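/- Boolean Breiman theorem, dominated case: let 0 ≤ α < β and let μ, ν be probability measures on [0,∞) with regularly varying tails of index −α and −β respectively, where ν has finite mean m(ν) = ∫ x dν(x). If ρ is a probability measure on [0,∞) with B_ρ(z) = B_μ(z)·B_ν(z) for all z ∈ ℂ∖[0,∞) (so ρ = μ ⨯∪ ν, the multiplicative Boolean convolution of μ and ν), then ρ has regularly varying tail of index −α and ρ(y,∞)/(m(ν)·μ(y,∞)) → 1 as y → ∞. -/

import Mathlib

open MeasureTheory Filter Set Complex

noncomputable section

/-- `Ψ_τ(z) = ∫ zt/(1 − zt) dτ(t)`. -/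
def PsiTrans (τ : Measure ℝ) (z : ℂ) : ℂ := ∫ t, (z * (t : ℂ)) / (1 - z * (t : ℂ)) ∂τ

/-- `η_τ(z) = Ψ_τ(z)/(1 + Ψ_τ(z))`. -/
def etaTrans (τ : Measure ℝ) (z : ℂ) : ℂ := PsiTrans τ z / (1 + PsiTrans τ z)

/-- `B_τ(z) = z/η_τ(z)`. -/
def Btrans (τ : Measure ℝ) (z : ℂ) : ℂ := z / etaTrans τ z

/-- membership of `z` in `ℂ ∖ [0,∞)`. -/
def offHalfLine (z : ℂ) : Prop := z.im ≠ 0 ∨ z.re < 0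

/-- `μ` has a regularly varying tail of index `−α`. -/
def RegVarTail (μ : Measure ℝ) (α : ℝ) : Prop :=
  (∀ x : ℝ, 0 ≤ x → 0 < μ (Set.Ioi x)) ∧
  ∀ t : ℝ, 0 < t →
    Filter.Tendsto (fun x : ℝ => (μ (Set.Ioi (t * x))).toReal / (μ (Set.Ioi x)).toReal)
      Filter.atTop (nhds (t ^ (-α)))

/-!
On the negative half-line, `B_ρ = B_μ B_ν` is an algebraic identity between the functions
`z ↦ ∫ t / (1 + zt) dτ(t)`, `τ = μ, ν, ρ`. Comparing Taylor coefficients at each `z > 0` turns it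
into an identity of power series `Q = P p + Q K`, in which the coefficients of `P` and `Q` are, up
to sign, the moments `∫ (zt / (1 + zt)) ^ k dτ(t)` of `μ` and `ρ`.

Measure sizes as `z → 0` against `θ = μ(1/z, ∞)` and `φ = z ^ r`, with `r < 1` close to `1`. The
`k`-th moment of `μ` is `O(θ)` if `k > α` and `O(φ ^ k)` otherwise, while the `j`-th coefficients of
`p` and `K` turn `O(φ ^ a) + O(θ)` into `O(φ ^ (a + j)) + o(θ)`; for `p` this is where `ν` having a
moment of order larger than `α` enters. As `p₀ → m(ν)` and `K₀ → 0`, the `k`-th moments of `ρ` and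
`m(ν) μ` differ by `O(φ ^ k) + o(θ)`, which is `o(θ)` for `k > α`.

Approximating a continuous cutoff on `[0, 1]` that vanishes near `0` by `v ^ n` times a polynomial
transfers this to the tails of `ρ` and `m(ν) μ`, up to a dilation that regular variation absorbs.
-/

open Topology Asymptotics

section Transforms

/-- The increasing bijection `s ↦ s / (1 + s)` of `[0, ∞)` onto `[0, 1)`. -/
def toUnit (s : ℝ) : ℝ := s / (1 + s)

lemma toUnit_mem_Icc {s : ℝ} (hs : 0 ≤ s) : toUnit s ∈ Icc (0 : ℝ) 1 :=
  ⟨by unfold toUnit; positivity, div_le_one_of_le₀ (by linarith) (by linarith)⟩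

lemma toUnit_le_self {s : ℝ} (hs : 0 ≤ s) : toUnit s ≤ s :=
  div_le_self hs (by linarith)

lemma toUnit_pos {s : ℝ} (hs : 0 < s) : 0 < toUnit s := by
  unfold toUnit; positivity

lemma toUnit_strictMonoOn : StrictMonoOn toUnit (Ici 0) := by
  intro s hs t ht hst
  rw [mem_Ici] at hs ht
  rw [toUnit, toUnit, div_lt_div_iff₀ (by linarith) (by linarith)]
  linarith

lemma measurable_toUnit : Measurable toUnit := by
  unfold toUnit; fun_prop

/-- `∫ f (zt / (1 + zt)) dτ(t)`: the integral of `f` against the image of `τ` under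
`t ↦ toUnit (z * t)`. -/
def unitTransform (τ : Measure ℝ) (f : ℝ → ℝ) (z : ℝ) : ℝ := ∫ t, f (toUnit (z * t)) ∂τ

/-- `∫ (zt / (1 + zt)) ^ k dτ(t)`, the `k`-th moment of the image of `τ` in `[0, 1)`: the quantity
through which the tails of `τ` are compared. -/
abbrev unitMoment (τ : Measure ℝ) (k : ℕ) : ℝ → ℝ := unitTransform τ (· ^ k)

/-- `∫ (t / (1 + zt)) ^ k dτ(t)`: up to constants, the derivatives in `z` of the case `k = 1`. -/
def resolventMoment (τ : Measure ℝ) (k : ℕ) (z : ℝ) : ℝ := ∫ t, (t / (1 + z * t)) ^ k ∂τ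

lemma unitMoment_eq_pow_mul_resolventMoment (τ : Measure ℝ) (k : ℕ) (z : ℝ) :
    unitMoment τ k z = z ^ k * resolventMoment τ k z := by
  simp only [unitMoment, unitTransform, resolventMoment, toUnit, ← integral_const_mul, ← mul_pow,
    mul_div_assoc]

lemma div_one_add_mul_mem_Icc {z t : ℝ} (hz : 0 < z) (ht : 0 ≤ t) :
    t / (1 + z * t) ∈ Icc 0 z⁻¹ := by
  refine ⟨by positivity, ?_⟩
  rw [div_le_iff₀ (by positivity), mul_add, inv_mul_cancel_left₀ hz.ne']
  linarith [inv_pos.2 hz]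

lemma hasDerivAt_resolvent_pow (k : ℕ) {z t : ℝ} (hz : 0 < z) (ht : 0 ≤ t) :
    HasDerivAt (fun y => (t / (1 + y * t)) ^ (k + 1)) (-(k + 1) * (t / (1 + z * t)) ^ (k + 2))
      z := by
  have hne : 1 + z * t ≠ 0 := by positivity
  have hden : HasDerivAt (fun y => 1 + y * t) t z := by
    simpa using ((hasDerivAt_id z).mul_const t).const_add 1
  have hdiv : HasDerivAt (fun y => t / (1 + y * t)) (-(t / (1 + z * t)) ^ 2) z :=
    ((hasDerivAt_const z t).div hden hne).congr_deriv (by field_simp; ring)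
  refine (hdiv.pow (k + 1)).congr_deriv ?_
  push_cast
  ring

variable {τ : Measure ℝ} {z : ℝ}

lemma ae_nonneg_of_measure_Iio_eq_zero (hτ : τ (Iio 0) = 0) : ∀ᵐ t ∂τ, 0 ≤ t := by
  simpa [ae_iff, Iio] using hτ

variable (hτ : ∀ᵐ t ∂τ, 0 ≤ t)
include hτ

lemma unitMoment_nonneg (k : ℕ) (hz : 0 ≤ z) : 0 ≤ unitMoment τ k z := by
  refine integral_nonneg_of_ae ?_
  filter_upwards [hτ] with t ht
  exact pow_nonneg (toUnit_mem_Icc (by positivity)).1 k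

variable [IsFiniteMeasure τ]

lemma integrable_comp_toUnit {f : ℝ → ℝ} (hf : Continuous f) (hz : 0 ≤ z) :
    Integrable (fun t => f (toUnit (z * t))) τ := by
  obtain ⟨M, hM⟩ := (isCompact_Icc (a := (0 : ℝ)) (b := 1)).exists_bound_of_continuousOn
    hf.continuousOn
  refine .of_bound ?_ M ?_
  · exact (hf.measurable.comp (measurable_toUnit.comp
      (measurable_const_mul z))).aestronglyMeasurable
  · filter_upwards [hτ] with t ht using hM _ (toUnit_mem_Icc (by positivity))

lemma abs_unitTransform_sub_le {f g : ℝ → ℝ} {δ : ℝ} {n : ℕ} (hf : Continuous f)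
    (hg : Continuous g) (hz : 0 ≤ z) (hfg : ∀ v ∈ Icc (0 : ℝ) 1, |f v - g v| ≤ δ * v ^ n) :
    |unitTransform τ f z - unitTransform τ g z| ≤ δ * unitMoment τ n z := by
  rw [unitMoment, unitTransform, unitTransform, unitTransform, ← integral_const_mul,
    ← integral_sub (integrable_comp_toUnit hτ hf hz) (integrable_comp_toUnit hτ hg hz)]
  rw [← Real.norm_eq_abs]
  refine norm_integral_le_of_norm_le
    ((integrable_comp_toUnit hτ (continuous_pow n) hz).const_mul δ) ?_
  filter_upwards [hτ] with t ht using hfg _ (toUnit_mem_Icc (by positivity))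

lemma integrable_resolvent_pow (k : ℕ) (hz : 0 < z) :
    Integrable (fun t => (t / (1 + z * t)) ^ k) τ := by
  refine .of_bound (Measurable.aestronglyMeasurable (by fun_prop)) (z⁻¹ ^ k) ?_
  filter_upwards [hτ] with t ht
  obtain ⟨h0, h1⟩ := div_one_add_mul_mem_Icc hz ht
  rw [norm_pow, Real.norm_of_nonneg h0]
  gcongr

lemma hasDerivAt_resolventMoment (k : ℕ) (hz : 0 < z) :
    HasDerivAt (resolventMoment τ (k + 1)) (-(k + 1) * resolventMoment τ (k + 2) z) z := by
  have hpos : ∀ y ∈ Ioi (z / 2), 0 < y := fun y hy => (half_pos hz).trans hy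
  unfold resolventMoment
  rw [← integral_const_mul]
  refine (hasDerivAt_integral_of_dominated_loc_of_deriv_le (s := Ioi (z / 2))
    (F' := fun y t => -(k + 1) * (t / (1 + y * t)) ^ (k + 2))
    (bound := fun _ => (k + 1) * (z / 2)⁻¹ ^ (k + 2)) (Ioi_mem_nhds (half_lt_self hz))
    (.of_forall fun y => Measurable.aestronglyMeasurable (by fun_prop))
    (integrable_resolvent_pow hτ (k + 1) hz) (Measurable.aestronglyMeasurable (by fun_prop))
    ?_ (integrable_const _) ?_).2
  · filter_upwards [hτ] with t ht y hy
    obtain ⟨h0, h1⟩ := div_one_add_mul_mem_Icc (hpos y hy) ht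
    have hinv : y⁻¹ ≤ (z / 2)⁻¹ := inv_anti₀ (half_pos hz) (le_of_lt hy)
    rw [norm_mul, norm_neg, norm_pow, Real.norm_of_nonneg h0,
      Real.norm_of_nonneg (by positivity : (0 : ℝ) ≤ k + 1)]
    gcongr
    exact h1.trans hinv
  · filter_upwards [hτ] with t ht y hy using hasDerivAt_resolvent_pow k (hpos y hy) ht

end Transforms

section FormalTaylor

open PowerSeries

/-- `F`, a power series whose coefficients are functions, is on `U` the Taylor expansion
`∑ⱼ f⁽ʲ⁾(z) Xʲ / j!` of its constant coefficient `f`. Encoded by the recursion that differentiating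
a coefficient in `z` agrees with differentiating formally in `X`. -/
def IsTaylor (U : Set ℝ) (F : (ℝ → ℝ)⟦X⟧) : Prop :=
  ∀ z ∈ U, ∀ j, HasDerivAt (coeff j F) (coeff j (d⁄dX (ℝ → ℝ) F) z) z

namespace IsTaylor

variable {U : Set ℝ} {F G : (ℝ → ℝ)⟦X⟧}

lemma add (hF : IsTaylor U F) (hG : IsTaylor U G) : IsTaylor U (F + G) := by
  intro z hz j
  rw [map_add, map_add, map_add]
  exact (hF z hz j).add (hG z hz j)

lemma sub (hF : IsTaylor U F) (hG : IsTaylor U G) : IsTaylor U (F - G) := by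
  intro z hz j
  rw [map_sub, map_sub, map_sub]
  exact (hF z hz j).sub (hG z hz j)

lemma mul (hF : IsTaylor U F) (hG : IsTaylor U G) : IsTaylor U (F * G) := by
  intro z hz j
  have hsum := HasDerivAt.sum (u := Finset.HasAntidiagonal.antidiagonal j) fun p _ =>
    (hF z hz p.1).mul (hG z hz p.2)
  rw [coeff_mul]
  refine hsum.congr_deriv ?_
  rw [Derivation.leibniz, smul_eq_mul, smul_eq_mul, mul_comm G, add_comm, map_add, coeff_mul,
    coeff_mul]
  simp only [Pi.add_apply, Finset.sum_apply, Pi.mul_apply, Finset.sum_add_distrib]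

lemma C_id_add_X : IsTaylor U (C id + X) := by
  intro z _ j
  match j with
  | 0 => simpa [coeff_derivative, coeff_C, coeff_X] using hasDerivAt_id z
  | 1 => simpa [coeff_X] using hasDerivAt_one z
  | j + 2 => simp [coeff_X]

lemma eqOn_coeff (hU : IsOpen U) (hF : IsTaylor U F) (hG : IsTaylor U G)
    (h0 : EqOn (coeff 0 F) (coeff 0 G) U) (j : ℕ) : EqOn (coeff j F) (coeff j G) U := by
  induction j with
  | zero => exact h0
  | succ j ih =>
    intro z hz
    have hderiv := ((hG z hz j).congr_of_eventuallyEq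
      (ih.eventuallyEq_of_mem (hU.mem_nhds hz))).unique (hF z hz j)
    simp only [coeff_derivative, Pi.mul_apply] at hderiv
    exact (mul_right_cancel₀ (Nat.cast_add_one_ne_zero j) hderiv).symm

end IsTaylor

/-- The Taylor series at `z` of `z ↦ ∫ t / (1 + zt) dτ(t)`. -/
def resolventSeries (τ : Measure ℝ) : (ℝ → ℝ)⟦X⟧ :=
  mk fun j z => (-1) ^ j * resolventMoment τ (j + 1) z

/-- `resolventSeries` in the variable `zX`, the dilation that makes coefficients scale-free. -/
def scaledSeries (τ : Measure ℝ) : (ℝ → ℝ)⟦X⟧ := rescale id (resolventSeries τ)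

/-- The generating series of the moments `unitMoment τ (j + 1)`, with alternating signs. -/
def unitMomentSeries (τ : Measure ℝ) : (ℝ → ℝ)⟦X⟧ := C id * scaledSeries τ

lemma coeff_unitMomentSeries (τ : Measure ℝ) (j : ℕ) :
    coeff j (unitMomentSeries τ) = (-1 : ℝ) ^ j • unitMoment τ (j + 1) := by
  ext z
  simp only [unitMomentSeries, scaledSeries, resolventSeries, coeff_C_mul, coeff_rescale, coeff_mk,
    Pi.mul_apply, Pi.pow_apply, id, Pi.smul_apply, smul_eq_mul,
    unitMoment_eq_pow_mul_resolventMoment]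
  ring

lemma mul_coeff_scaledSeries (τ : Measure ℝ) (j : ℕ) (z : ℝ) :
    z * coeff j (scaledSeries τ) z = (-1) ^ j * unitMoment τ (j + 1) z := by
  simpa [unitMomentSeries] using congrFun (coeff_unitMomentSeries τ j) z

lemma isTaylor_resolventSeries {τ : Measure ℝ} [IsFiniteMeasure τ] (hτ : ∀ᵐ t ∂τ, 0 ≤ t) :
    IsTaylor (Ioi 0) (resolventSeries τ) := by
  intro z hz j
  simp only [resolventSeries, coeff_mk, coeff_derivative]
  refine ((hasDerivAt_resolventMoment hτ j hz).const_mul ((-1 : ℝ) ^ j)).congr_deriv ?_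
  simp only [Pi.mul_apply, Pi.add_apply, Pi.natCast_apply, Pi.one_apply]
  ring

/-- The factor `K` in `Q = P p + Q K`, where `P`, `Q` are the `unitMomentSeries` of `μ` and of the
Boolean convolution, and `p` is the `scaledSeries` of `ν`. -/
def booleanKernel (μ ν : Measure ℝ) : (ℝ → ℝ)⟦X⟧ :=
  (1 + X) * unitMomentSeries μ + C id * (1 + X) * scaledSeries ν
    - (1 + X) * unitMomentSeries μ * scaledSeries ν
    - C id * (1 + X) * ((1 + X) * unitMomentSeries μ * scaledSeries ν)

/-- The Boolean convolution identity `B_ρ = B_μ B_ν` on the negative half-line, with denominators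
cleared: `resolventMoment τ 1 z` is `-Ψ_τ(-z) / z`. -/
def IsBooleanConv (μ ν ρ : Measure ℝ) : Prop :=
  ∀ z > 0, (1 - z * resolventMoment ρ 1 z) * (resolventMoment μ 1 z * resolventMoment ν 1 z) =
    resolventMoment ρ 1 z * ((1 - z * resolventMoment μ 1 z) * (1 - z * resolventMoment ν 1 z))

lemma rescale_C_id : rescale (id : ℝ → ℝ) (C id) = C id := by
  ext1 j
  cases j <;> simp [coeff_rescale, coeff_C]

lemma eqOn_coeff_C_mul_rescale {U : Set ℝ} {F G : (ℝ → ℝ)⟦X⟧} (a : ℝ → ℝ)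
    (h : ∀ j, EqOn (coeff j F) (coeff j G) U) (j : ℕ) :
    EqOn (coeff j (C a * rescale a F)) (coeff j (C a * rescale a G)) U := by
  intro z hz
  simp only [coeff_C_mul, coeff_rescale, Pi.mul_apply, h j hz]

lemma coeff_unitMomentSeries_eqOn {μ ν ρ : Measure ℝ} [IsFiniteMeasure μ] [IsFiniteMeasure ν]
    [IsFiniteMeasure ρ] (hμ : ∀ᵐ t ∂μ, 0 ≤ t) (hν : ∀ᵐ t ∂ν, 0 ≤ t) (hρ : ∀ᵐ t ∂ρ, 0 ≤ t)
    (hconv : IsBooleanConv μ ν ρ) (j : ℕ) :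
    EqOn (coeff j (unitMomentSeries ρ)) (coeff j (unitMomentSeries μ * scaledSeries ν +
      unitMomentSeries ρ * booleanKernel μ ν)) (Ioi 0) := by
  have Tμ := isTaylor_resolventSeries hμ
  have Tν := isTaylor_resolventSeries hν
  have Tρ := isTaylor_resolventSeries hρ
  have Tz : IsTaylor (Ioi 0) (C id + X) := .C_id_add_X
  have hTaylor := Tρ.eqOn_coeff isOpen_Ioi ((Tμ.mul Tν).add (Tρ.mul ((((Tz.mul Tμ).add
    (Tz.mul Tν)).sub ((Tz.mul Tμ).mul Tν)).sub (Tz.mul ((Tz.mul Tμ).mul Tν))))) ?_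
  · refine (eqOn_coeff_C_mul_rescale id hTaylor j).trans
      fun z _ => congrFun (congrArg (coeff j) ?_) z
    simp only [map_add, map_sub, map_mul, rescale_X, rescale_C_id, booleanKernel,
      unitMomentSeries, scaledSeries]
    ring
  · intro z hz
    have := hconv z hz
    simp only [coeff_zero_eq_constantCoeff, map_add, map_sub, map_mul, constantCoeff_C,
      constantCoeff_X, resolventSeries, constantCoeff_mk, pow_zero, zero_add, one_mul, add_zero,
      Pi.add_apply, Pi.mul_apply, Pi.sub_apply, id_eq]
    linarith

end FormalTaylor

section BooleanTransform

variable {τ : Measure ℝ}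

lemma integral_pos_of_ae_pos {Ω : Type*} [MeasurableSpace Ω] {κ : Measure Ω} [NeZero κ]
    {f : Ω → ℝ} (hf : ∀ᵐ t ∂κ, 0 < f t) (hfi : Integrable f κ) : 0 < ∫ t, f t ∂κ := by
  have hsupport : Function.support f =ᵐ[κ] univ :=
    eventuallyEq_univ.2 (hf.mono fun _ h => h.ne')
  rw [integral_pos_iff_support_of_nonneg_ae (hf.mono fun _ h => h.le) hfi,
    measure_congr hsupport]
  exact Measure.measure_univ_pos.2 (NeZero.ne κ)

lemma PsiTrans_neg_ofReal (z : ℝ) :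
    PsiTrans τ (-z) = ((-(z * resolventMoment τ 1 z) : ℝ) : ℂ) := by
  rw [PsiTrans, resolventMoment, ← integral_const_mul, ← integral_neg, ← integral_complex_ofReal]
  congr 1 with t
  push_cast
  ring

lemma Btrans_neg_ofReal {z : ℝ} (hz : z ≠ 0) :
    Btrans τ (-z) = (((1 - z * resolventMoment τ 1 z) / resolventMoment τ 1 z : ℝ) : ℂ) := by
  have hz' : (z : ℂ) ≠ 0 := ofReal_ne_zero.2 hz
  rw [Btrans, etaTrans, PsiTrans_neg_ofReal, div_div_eq_mul_div]
  push_cast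
  rw [neg_mul, neg_div_neg_eq, mul_div_mul_left _ _ hz', ← sub_eq_add_neg]

lemma integral_id_pos (hτ : ∀ᵐ t ∂τ, 0 ≤ t) (hpos : 0 < τ (Ioi 0))
    (hmean : Integrable (fun x => x) τ) : 0 < ∫ x, x ∂τ := by
  rw [integral_pos_iff_support_of_nonneg_ae hτ hmean]
  exact hpos.trans_le (measure_mono fun t ht => (mem_Ioi.1 ht).ne')

lemma resolventMoment_one_pos [IsFiniteMeasure τ] (hτ : ∀ᵐ t ∂τ, 0 ≤ t) (hpos : 0 < τ (Ioi 0))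
    {z : ℝ} (hz : 0 < z) : 0 < resolventMoment τ 1 z := by
  rw [resolventMoment, integral_pos_iff_support_of_nonneg_ae _ (integrable_resolvent_pow hτ 1 hz)]
  · refine hpos.trans_le (measure_mono fun t (ht : 0 < t) => ne_of_gt ?_)
    positivity
  · filter_upwards [hτ] with t ht
    exact pow_nonneg (div_one_add_mul_mem_Icc hz ht).1 1

lemma one_sub_mul_resolventMoment_one_pos [IsProbabilityMeasure τ] (hτ : ∀ᵐ t ∂τ, 0 ≤ t)
    {z : ℝ} (hz : 0 < z) : 0 < 1 - z * resolventMoment τ 1 z := by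
  have hint := (integrable_resolvent_pow hτ 1 hz).const_mul z
  have h1 : 1 - z * resolventMoment τ 1 z = ∫ t, (1 - z * (t / (1 + z * t)) ^ 1) ∂τ := by
    rw [integral_sub (integrable_const _) hint, integral_const_mul]
    simp [resolventMoment]
  rw [h1]
  refine integral_pos_of_ae_pos ?_ ((integrable_const _).sub hint)
  filter_upwards [hτ] with t ht
  have : 0 < 1 + z * t := by positivity
  rw [pow_one, mul_div_assoc', sub_pos, div_lt_one this]
  linarith

lemma isBooleanConv_of_Btrans {μ ν ρ : Measure ℝ} [IsProbabilityMeasure μ]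
    [IsProbabilityMeasure ν] (hμ : ∀ᵐ t ∂μ, 0 ≤ t) (hν : ∀ᵐ t ∂ν, 0 ≤ t)
    (hμpos : 0 < μ (Ioi 0)) (hνpos : 0 < ν (Ioi 0))
    (hB : ∀ z : ℂ, offHalfLine z → Btrans ρ z = Btrans μ z * Btrans ν z) :
    IsBooleanConv μ ν ρ := by
  intro z hz
  have hBz := hB (-z) (Or.inr (by simpa using hz))
  simp only [Btrans_neg_ofReal hz.ne', ← ofReal_mul, ofReal_inj] at hBz
  have hgμ := resolventMoment_one_pos hμ hμpos hz
  have hgν := resolventMoment_one_pos hν hνpos hz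
  -- `B_ρ(-z) ≠ 0` excludes the junk value `x / 0 = 0` on the left.
  have hgρ : resolventMoment ρ 1 z ≠ 0 := by
    intro h0
    rw [h0, div_zero] at hBz
    exact (mul_pos (div_pos (one_sub_mul_resolventMoment_one_pos hμ hz) hgμ)
      (div_pos (one_sub_mul_resolventMoment_one_pos hν hz) hgν)).ne hBz
  rwa [div_mul_div_comm, div_eq_div_iff hgρ (mul_pos hgμ hgν).ne', mul_comm (_ * _)] at hBz

end BooleanTransform

section MixedOrder

variable {ι : Type*} {l : Filter ι}

/-- The submodule of functions that are `O(g)` along `l`. -/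
def bigO (l : Filter ι) (g : ι → ℝ) : Submodule ℝ (ι → ℝ) where
  carrier := {f | f =O[l] g}
  add_mem' hf₁ hf₂ := hf₁.add hf₂
  zero_mem' := isBigO_zero g l
  smul_mem' c _ hf := hf.const_smul_left c

/-- The submodule of functions that are `o(g)` along `l`. -/
def littleO (l : Filter ι) (g : ι → ℝ) : Submodule ℝ (ι → ℝ) where
  carrier := {f | f =o[l] g}
  add_mem' hf₁ hf₂ := hf₁.add hf₂
  zero_mem' := isLittleO_zero g l
  smul_mem' c _ hf := hf.const_smul_left c

lemma littleO_le_bigO (g : ι → ℝ) : littleO l g ≤ bigO l g := fun _ hf => hf.isBigO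

lemma bigO_mul_bigO_le (f g : ι → ℝ) : bigO l f * bigO l g ≤ bigO l (f * g) :=
  Submodule.mul_le.2 fun _ hf _ hg => hf.mul hg

lemma bigO_mul_littleO_le (f g : ι → ℝ) : bigO l f * littleO l g ≤ littleO l (f * g) :=
  Submodule.mul_le.2 fun _ hf _ hg => hf.mul_isLittleO hg

lemma littleO_mul_bigO_le (f g : ι → ℝ) : littleO l f * bigO l g ≤ littleO l (f * g) :=
  Submodule.mul_le.2 fun _ hf _ hg => hf.mul_isBigO hg

lemma mem_littleO_one_iff {f : ι → ℝ} : f ∈ littleO l 1 ↔ Tendsto f l (𝓝 0) :=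
  isLittleO_one_iff ℝ

lemma bigO_le_littleO_one {g : ι → ℝ} (hg : Tendsto g l (𝓝 0)) : bigO l g ≤ littleO l 1 :=
  fun _ hf => mem_littleO_one_iff.2 (hf.trans_tendsto hg)

/-- Functions of the form `O(φ ^ a) + O(θ)`: size `φ ^ a` until that falls below the fixed
threshold `θ`. -/
def mixedBigO (l : Filter ι) (φ θ : ι → ℝ) (a : ℕ) : Submodule ℝ (ι → ℝ) :=
  bigO l (φ ^ a) ⊔ bigO l θ

/-- Functions of the form `O(φ ^ a) + o(θ)`, the error terms that are negligible once
`φ ^ a = o(θ)`. -/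
def mixedLittleO (l : Filter ι) (φ θ : ι → ℝ) (a : ℕ) : Submodule ℝ (ι → ℝ) :=
  bigO l (φ ^ a) ⊔ littleO l θ

variable {φ θ : ι → ℝ}

lemma mixedLittleO_le_mixedBigO (a : ℕ) : mixedLittleO l φ θ a ≤ mixedBigO l φ θ a :=
  sup_le_sup_left (littleO_le_bigO θ) _

lemma mixedLittleO_mul_bigO_one_le (a : ℕ) :
    mixedLittleO l φ θ a * bigO l 1 ≤ mixedLittleO l φ θ a := by
  rw [mixedLittleO, Submodule.sup_mul]
  exact sup_le_sup ((bigO_mul_bigO_le _ _).trans_eq (by rw [mul_one]))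
    ((littleO_mul_bigO_le _ _).trans_eq (by rw [mul_one]))

lemma mixedBigO_mul_littleO_one_le (a : ℕ) :
    mixedBigO l φ θ a * littleO l 1 ≤ mixedLittleO l φ θ a := by
  rw [mixedBigO, Submodule.sup_mul]
  refine sup_le_sup ((bigO_mul_littleO_le _ _).trans ?_)
    ((bigO_mul_littleO_le _ _).trans_eq (by rw [mul_one]))
  rw [mul_one]
  exact littleO_le_bigO _

lemma mixedLittleO_of_eventuallyEq {f g : ι → ℝ} {a : ℕ} (hf : f ∈ mixedLittleO l φ θ a)
    (hfg : g =ᶠ[l] f) : g ∈ mixedLittleO l φ θ a := by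
  have hsub : g - f ∈ littleO l θ := (isLittleO_zero θ l).congr' hfg.sub_eq.symm .rfl
  simpa using add_mem hf (Submodule.mem_sup_right hsub)

lemma isLittleO_of_mem_mixedLittleO {f : ι → ℝ} {a : ℕ} (hf : f ∈ mixedLittleO l φ θ a)
    (hφθ : (φ ^ a) =o[l] θ) : f =o[l] θ :=
  sup_le (show bigO l (φ ^ a) ≤ littleO l θ from fun _ hg => hg.trans_isLittleO hφθ) le_rfl hf

lemma isBigO_pow_of_le (hφ : Tendsto φ l (𝓝 0)) {a b : ℕ} (hab : a ≤ b) :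
    (φ ^ b) =O[l] (φ ^ a) := by
  obtain ⟨c, rfl⟩ := Nat.exists_eq_add_of_le hab
  exact ((isBigO_refl (φ ^ a) l).mul ((hφ.pow c).isBigO_one ℝ)).congr
    (fun x => (pow_add (φ x) a c).symm) fun x => mul_one (φ x ^ a)

lemma mixedBigO_succ_le (hφ : Tendsto φ l (𝓝 0)) (a : ℕ) :
    mixedBigO l φ θ (a + 1) ≤ mixedBigO l φ θ a :=
  sup_le_sup_right (fun _ hf => hf.trans (isBigO_pow_of_le hφ a.le_succ)) _

lemma mixedBigO_le_littleO_one (hφ : Tendsto φ l (𝓝 0)) (hθ : Tendsto θ l (𝓝 0)) {a : ℕ}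
    (ha : 1 ≤ a) : mixedBigO l φ θ a ≤ littleO l 1 := by
  refine sup_le (bigO_le_littleO_one ?_) (bigO_le_littleO_one hθ)
  exact (zero_pow (M₀ := ℝ) (Nat.ne_of_gt ha)) ▸ hφ.pow a

lemma mixedBigO_mul_mixedBigO_le (hφ : Tendsto φ l (𝓝 0)) (hθ : Tendsto θ l (𝓝 0)) {a b : ℕ}
    (ha : 1 ≤ a) (hb : 1 ≤ b) :
    mixedBigO l φ θ a * mixedBigO l φ θ b ≤ mixedLittleO l φ θ (a + b) := by
  have hθmul : ∀ {c : ℕ}, 1 ≤ c → bigO l θ * mixedBigO l φ θ c ≤ littleO l θ := fun hc =>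
    (mul_le_mul' le_rfl (mixedBigO_le_littleO_one hφ hθ hc)).trans
      ((bigO_mul_littleO_le _ _).trans_eq (by rw [mul_one]))
  nth_rw 1 [mixedBigO]
  rw [Submodule.sup_mul]
  refine sup_le ?_ ((hθmul hb).trans le_sup_right)
  nth_rw 1 [mixedBigO]
  rw [Submodule.mul_sup]
  refine sup_le_sup ((bigO_mul_bigO_le _ _).trans_eq (by rw [pow_add])) ?_
  rw [mul_comm]
  exact (mul_le_mul' le_rfl le_sup_left).trans (hθmul ha)

end MixedOrder

section Multipliers

open PowerSeries

variable {ι : Type*} {l : Filter ι} {φ θ : ι → ℝ}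

/-- Functions `c` that multiply `O(φ ^ a) + O(θ)` into `O(φ ^ (a + j)) + o(θ)` for all `a ≥ 1`. -/
def orderRaising (l : Filter ι) (φ θ : ι → ℝ) (j : ℕ) : Submodule ℝ (ι → ℝ) where
  carrier := {c | ∀ a ≥ 1, ∀ f ∈ mixedBigO l φ θ a, f * c ∈ mixedLittleO l φ θ (a + j)}
  add_mem' hc hd a ha f hf := by simpa only [mul_add] using add_mem (hc a ha f hf) (hd a ha f hf)
  zero_mem' a _ f _ := by simp
  smul_mem' r c hc a ha f hf := by
    simpa only [mul_smul_comm] using Submodule.smul_mem _ r (hc a ha f hf)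

lemma mem_orderRaising_of_mem_mixedBigO (hφ : Tendsto φ l (𝓝 0)) (hθ : Tendsto θ l (𝓝 0)) {j : ℕ}
    (hj : 1 ≤ j) {c : ι → ℝ} (hc : c ∈ mixedBigO l φ θ j) : c ∈ orderRaising l φ θ j :=
  fun _ ha _ hf => mixedBigO_mul_mixedBigO_le hφ hθ ha hj (Submodule.mul_mem_mul hf hc)

lemma mem_orderRaising_of_isLittleO (hφ : Tendsto φ l (𝓝 0)) {c : ι → ℝ}
    (hc : Tendsto c l (𝓝 0)) (hφc : (φ * c) =o[l] θ) (j : ℕ) : c ∈ orderRaising l φ θ j := by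
  intro a ha f hf
  suffices h : mixedBigO l φ θ a ≤ (littleO l θ).comap (LinearMap.mulRight ℝ c) from
    Submodule.mem_sup_right (h hf)
  refine sup_le (fun g (hg : g =O[l] (φ ^ a)) => ?_) fun g (hg : g =O[l] θ) => ?_
  · have hgφ : g =O[l] φ := by simpa only [pow_one] using hg.trans (isBigO_pow_of_le hφ ha)
    exact (hgφ.mul (isBigO_refl c l)).trans_isLittleO hφc
  · exact (hg.mul_isLittleO ((isLittleO_one_iff ℝ).2 hc)).congr_right fun _ => mul_one _

lemma mul_mem_orderRaising_of_isBigO_one {j : ℕ} {c d : ι → ℝ} (hc : c ∈ orderRaising l φ θ j)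
    (hd : d ∈ bigO l 1) : c * d ∈ orderRaising l φ θ j := by
  intro a ha f hf
  rw [← mul_assoc]
  exact mixedLittleO_mul_bigO_one_le _ (Submodule.mul_mem_mul (hc a ha f hf) hd)

lemma mul_mem_orderRaising {i j : ℕ} {c d : ι → ℝ} (hc : c ∈ orderRaising l φ θ i)
    (hd : d ∈ orderRaising l φ θ j) : c * d ∈ orderRaising l φ θ (i + j) := by
  intro a ha f hf
  rw [← mul_assoc, ← add_assoc]
  exact hd _ (Nat.le_add_right_of_le ha) _ (mixedLittleO_le_mixedBigO _ (hc a ha f hf))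

/-- The power series `K` with `K₀ = O(1)` and with `Kⱼ` raising orders by `j` for `j ≥ 1`. -/
def multiplierRing (l : Filter ι) (φ θ : ι → ℝ) : Subring (ι → ℝ)⟦X⟧ where
  carrier := {K | coeff 0 K ∈ bigO l 1 ∧ ∀ j ≥ 1, coeff j K ∈ orderRaising l φ θ j}
  add_mem' hK hL := ⟨add_mem hK.1 hL.1, fun j hj => add_mem (hK.2 j hj) (hL.2 j hj)⟩
  zero_mem' := ⟨zero_mem _, fun _ _ => zero_mem _⟩
  neg_mem' hK := ⟨neg_mem hK.1, fun j hj => neg_mem (hK.2 j hj)⟩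
  one_mem' := by
    refine ⟨?_, fun j hj => ?_⟩
    · rw [coeff_zero_one]
      exact isBigO_refl _ l
    · simp [coeff_one, Nat.ne_of_gt hj]
  mul_mem' {K L} hK hL := by
    refine ⟨?_, fun j hj => ?_⟩
    · simpa using bigO_mul_bigO_le _ _ (Submodule.mul_mem_mul hK.1 hL.1)
    · rw [coeff_mul]
      refine sum_mem fun p hp => ?_
      obtain rfl : p.1 + p.2 = j := Finset.HasAntidiagonal.mem_antidiagonal.1 hp
      rcases Nat.eq_zero_or_pos p.1 with h₁ | h₁
      · rw [h₁, zero_add, mul_comm]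
        exact mul_mem_orderRaising_of_isBigO_one (hL.2 _ (by omega)) hK.1
      rcases Nat.eq_zero_or_pos p.2 with h₂ | h₂
      · rw [h₂, add_zero]
        exact mul_mem_orderRaising_of_isBigO_one (hK.2 _ h₁) hL.1
      · exact mul_mem_orderRaising (hK.2 _ h₁) (hL.2 _ h₂)

lemma mem_multiplierRing_of_coeff_mem_mixedBigO (hφ : Tendsto φ l (𝓝 0))
    (hθ : Tendsto θ l (𝓝 0)) {K : (ι → ℝ)⟦X⟧} (h0 : coeff 0 K ∈ bigO l 1)
    (hK : ∀ j ≥ 1, coeff j K ∈ mixedBigO l φ θ j) : K ∈ multiplierRing l φ θ :=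
  ⟨h0, fun j hj => mem_orderRaising_of_mem_mixedBigO hφ hθ hj (hK j hj)⟩

lemma one_add_X_mul_mem_multiplierRing (hφ : Tendsto φ l (𝓝 0)) (hθ : Tendsto θ l (𝓝 0))
    {P : (ι → ℝ)⟦X⟧} (hP : ∀ j, coeff j P ∈ mixedBigO l φ θ (j + 1)) :
    (1 + X) * P ∈ multiplierRing l φ θ := by
  refine mem_multiplierRing_of_coeff_mem_mixedBigO hφ hθ ?_ fun j hj => ?_
  · simpa [add_mul] using littleO_le_bigO _ (mixedBigO_le_littleO_one hφ hθ le_rfl (hP 0))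
  · obtain ⟨j, rfl⟩ := Nat.exists_eq_add_of_le' hj
    rw [add_mul, one_mul, map_add, coeff_succ_X_mul]
    exact add_mem (mixedBigO_succ_le hφ _ (hP _)) (hP j)

lemma C_mul_one_add_X_mem_multiplierRing (hφ : Tendsto φ l (𝓝 0)) (hθ : Tendsto θ l (𝓝 0))
    {c : ι → ℝ} (hc : c =O[l] φ) : C c * (1 + X) ∈ multiplierRing l φ θ := by
  refine mem_multiplierRing_of_coeff_mem_mixedBigO hφ hθ ?_ fun j hj => ?_
  · have h0 : c ∈ bigO l 1 := hc.trans (hφ.isBigO_one ℝ)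
    simpa using h0
  · match j with
    | 1 =>
      have h1 : c ∈ mixedBigO l φ θ 1 :=
        Submodule.mem_sup_left (show c =O[l] (φ ^ 1) by rwa [pow_one])
      simpa [coeff_one] using h1
    | j + 2 => simp [coeff_one, coeff_X]

lemma coeff_mul_sub_mem_mixedLittleO {P K : (ι → ℝ)⟦X⟧} {j : ℕ}
    (hP : ∀ i < j, coeff i P ∈ mixedBigO l φ θ (i + 1)) (hK : K ∈ multiplierRing l φ θ) :
    coeff j (P * K) - coeff j P * coeff 0 K ∈ mixedLittleO l φ θ (j + 1) := by
  rw [coeff_mul, Finset.Nat.sum_antidiagonal_eq_sum_range_succ_mk, Finset.sum_range_succ,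
    Nat.sub_self, add_sub_cancel_right]
  refine sum_mem fun i hi => ?_
  rw [Finset.mem_range] at hi
  have hmem := hK.2 (j - i) (by omega) (i + 1) (by omega) _ (hP i hi)
  rwa [show i + 1 + (j - i) = j + 1 by omega] at hmem

lemma mem_mixedLittleO_of_mul_one_sub_mem {f c : ι → ℝ} {a : ℕ} (hc : Tendsto c l (𝓝 0))
    (hf : f * (1 - c) ∈ mixedLittleO l φ θ a) : f ∈ mixedLittleO l φ θ a := by
  have hlim : Tendsto (fun x => 1 - c x) l (𝓝 1) := by simpa using hc.const_sub 1
  have hinv : (fun x => (1 - c x)⁻¹) ∈ bigO l 1 :=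
    (hlim.inv₀ one_ne_zero).isBigO_one ℝ
  refine mixedLittleO_of_eventuallyEq
    (mixedLittleO_mul_bigO_one_le a (Submodule.mul_mem_mul hf hinv)) ?_
  filter_upwards [hlim.eventually_ne one_ne_zero] with x hx
  exact (mul_inv_cancel_right₀ hx (f x)).symm

lemma coeff_sub_smul_mem_mixedLittleO {P Q p K : (ι → ℝ)⟦X⟧} {m : ℝ}
    (hP : ∀ j, coeff j P ∈ mixedBigO l φ θ (j + 1)) (hp : p ∈ multiplierRing l φ θ)
    (hK : K ∈ multiplierRing l φ θ) (hp0 : Tendsto (coeff 0 p) l (𝓝 m))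
    (hK0 : Tendsto (coeff 0 K) l (𝓝 0))
    (hQ : ∀ j, coeff j Q =ᶠ[l] coeff j (P * p + Q * K)) (j : ℕ) :
    coeff j Q - m • coeff j P ∈ mixedLittleO l φ θ (j + 1) := by
  induction j using Nat.strong_induction_on with
  | _ j ih =>
    have hQmem : ∀ i < j, coeff i Q ∈ mixedBigO l φ θ (i + 1) := fun i hi => by
      simpa using add_mem (mixedLittleO_le_mixedBigO _ (ih i hi))
        (Submodule.smul_mem _ m (hP i))
    have hmulLittleO : ∀ {c}, Tendsto c l (𝓝 0) → coeff j P * c ∈ mixedLittleO l φ θ (j + 1) :=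
      fun hc => mixedBigO_mul_littleO_one_le _
        (Submodule.mul_mem_mul (hP j) (mem_littleO_one_iff.2 hc))
    have hp0m : Tendsto (fun x => coeff 0 p x - m) l (𝓝 0) := by simpa using hp0.sub_const m
    refine mem_mixedLittleO_of_mul_one_sub_mem hK0 (mixedLittleO_of_eventuallyEq
      (add_mem (add_mem (coeff_mul_sub_mem_mixedLittleO (fun i _ => hP i) hp)
        (coeff_mul_sub_mem_mixedLittleO hQmem hK))
        (add_mem (hmulLittleO hp0m) (Submodule.smul_mem _ m (hmulLittleO hK0)))) ?_)
    filter_upwards [hQ j] with x hx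
    simp only [map_add, Pi.add_apply] at hx
    simp only [Pi.add_apply, Pi.sub_apply, Pi.mul_apply, Pi.smul_apply, Pi.one_apply, smul_eq_mul]
    linear_combination hx

end Multipliers

section RegularVariation

lemma dyadic_induction {P : ℝ → Prop} {x₀ : ℝ} (hx₀ : 0 < x₀) (base : ∀ x ∈ Icc x₀ (2 * x₀), P x)
    (step : ∀ x ≥ x₀, P x → P (2 * x)) : ∀ x ≥ x₀, P x := by
  suffices h : ∀ n : ℕ, ∀ x ≥ x₀, x ≤ 2 ^ n * (2 * x₀) → P x by
    intro x hx
    obtain ⟨n, hn⟩ := pow_unbounded_of_one_lt (x / (2 * x₀)) one_lt_two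
    exact h n x hx ((div_lt_iff₀ (by positivity)).1 hn).le
  intro n
  induction n with
  | zero => exact fun x hx hx' => base x ⟨hx, by simpa using hx'⟩
  | succ n ih =>
    intro x hx hx'
    rcases le_or_gt x (2 * x₀) with hle | hgt
    · exact base x ⟨hx, hle⟩
    · have hhalf := step (x / 2) (by linarith) (ih (x / 2) (by linarith)
        (by rw [pow_succ] at hx'; linarith))
      rwa [mul_div_cancel₀ x two_ne_zero] at hhalf

lemma isBigO_of_dyadic_step {f g : ℝ → ℝ} {q c L : ℝ} (hf : AntitoneOn f (Ioi 0))
    (hg : AntitoneOn g (Ioi 0)) (hf0 : ∀ x > 0, 0 ≤ f x) (hg0 : ∀ x > 0, 0 < g x) (hq : 0 ≤ q)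
    (hqL : q < L) (hstep : ∀ᶠ x in atTop, f (2 * x) ≤ q * f x + c * g x)
    (hL : ∀ᶠ x in atTop, L * g x ≤ g (2 * x)) : f =O[atTop] g := by
  obtain ⟨x₀, hx₀⟩ := eventually_atTop.1 ((eventually_gt_atTop 0).and (hstep.and hL))
  have hx₀pos : 0 < x₀ := (hx₀ x₀ le_rfl).1
  set M := max (f x₀ / g (2 * x₀)) (c / (L - q))
  have hM0 : 0 ≤ M := le_max_of_le_left (div_nonneg (hf0 _ hx₀pos) (hg0 _ (by positivity)).le)
  have hMstep : q * M + c ≤ L * M := by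
    linarith [(div_le_iff₀ (sub_pos.2 hqL)).1 (le_max_right _ _ : c / (L - q) ≤ M)]
  have hbound : ∀ x ≥ x₀, f x ≤ M * g x := by
    refine dyadic_induction hx₀pos (fun x hx => ?_) fun x hx hfx => ?_
    · have hxpos : 0 < x := hx₀pos.trans_le hx.1
      calc f x ≤ f x₀ := hf hx₀pos hxpos hx.1
        _ ≤ M * g (2 * x₀) :=
          (div_le_iff₀ (hg0 _ (by positivity))).1 (le_max_left _ _)
        _ ≤ M * g x :=
          mul_le_mul_of_nonneg_left (hg hxpos (hxpos.trans_le hx.2) hx.2) hM0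
    · obtain ⟨hxpos, hstepx, hLx⟩ := hx₀ x hx
      calc f (2 * x) ≤ q * f x + c * g x := hstepx
        _ ≤ (q * M + c) * g x := by linarith [mul_le_mul_of_nonneg_left hfx hq]
        _ ≤ L * M * g x := mul_le_mul_of_nonneg_right hMstep (hg0 x hxpos).le
        _ ≤ M * g (2 * x) := by linarith [mul_le_mul_of_nonneg_left hLx hM0]
  refine IsBigO.of_bound M ?_
  filter_upwards [eventually_ge_atTop x₀] with x hx
  have hxpos : 0 < x := hx₀pos.trans_le hx
  rw [Real.norm_of_nonneg (hf0 x hxpos), Real.norm_of_nonneg (hg0 x hxpos).le]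
  exact hbound x hx

lemma antitone_measureReal_Ioi (τ : Measure ℝ) [IsFiniteMeasure τ] :
    Antitone fun x => τ.real (Ioi x) :=
  fun _ _ hxy => measureReal_mono (Ioi_subset_Ioi hxy)

lemma antitoneOn_rpow_neg {s : ℝ} (hs : 0 ≤ s) : AntitoneOn (fun x : ℝ => x ^ (-s)) (Ioi 0) :=
  fun _ hx _ _ hxy => Real.rpow_le_rpow_of_nonpos hx hxy (neg_nonpos.2 hs)

lemma tendsto_measureReal_Ioi_atTop (τ : Measure ℝ) [IsFiniteMeasure τ] :
    Tendsto (fun x => τ.real (Ioi x)) atTop (𝓝 0) := by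
  have hinter : ⋂ x : ℝ, Ioi x = ∅ :=
    eq_empty_of_forall_notMem fun y hy => lt_irrefl y (mem_iInter.1 hy y)
  have hmeas := tendsto_measure_iInter_atTop (μ := τ) (s := fun x : ℝ => Ioi x)
    (fun _ => measurableSet_Ioi.nullMeasurableSet) (fun _ _ => Ioi_subset_Ioi)
    ⟨0, measure_ne_top _ _⟩
  rw [hinter, measure_empty] at hmeas
  exact (ENNReal.tendsto_toReal ENNReal.zero_ne_top).comp hmeas

namespace RegVarTail

variable {μ : Measure ℝ} [IsFiniteMeasure μ] {α : ℝ}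

lemma measureReal_Ioi_pos (hμ : RegVarTail μ α) {x : ℝ} (hx : 0 ≤ x) : 0 < μ.real (Ioi x) :=
  ENNReal.toReal_pos (hμ.1 x hx).ne' (measure_ne_top _ _)

lemma eventually_le_mul (hμ : RegVarTail μ α) {t r : ℝ} (ht : 0 < t) (hr : t ^ (-α) < r) :
    ∀ᶠ x in atTop, μ.real (Ioi (t * x)) ≤ r * μ.real (Ioi x) := by
  filter_upwards [(hμ.2 t ht).eventually (gt_mem_nhds hr), eventually_ge_atTop 0] with x hx hx0
  exact ((div_lt_iff₀ (hμ.measureReal_Ioi_pos hx0)).1 hx).le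

lemma eventually_mul_le (hμ : RegVarTail μ α) {t r : ℝ} (ht : 0 < t) (hr : r < t ^ (-α)) :
    ∀ᶠ x in atTop, r * μ.real (Ioi x) ≤ μ.real (Ioi (t * x)) := by
  filter_upwards [(hμ.2 t ht).eventually (lt_mem_nhds hr), eventually_ge_atTop 0] with x hx hx0
  exact ((lt_div_iff₀ (hμ.measureReal_Ioi_pos hx0)).1 hx).le

lemma rpow_neg_isBigO (hμ : RegVarTail μ α) {s : ℝ} (hs : 0 ≤ s) (hαs : α < s) :
    (fun x => x ^ (-s)) =O[atTop] fun x => μ.real (Ioi x) := by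
  obtain ⟨L, hsL, hLα⟩ := exists_between
    (Real.rpow_lt_rpow_of_exponent_lt one_lt_two (neg_lt_neg hαs))
  refine isBigO_of_dyadic_step (c := 0) (antitoneOn_rpow_neg hs)
    ((antitone_measureReal_Ioi μ).antitoneOn _) (fun x hx => by positivity)
    (fun x hx => hμ.measureReal_Ioi_pos (le_of_lt hx)) (by positivity) hsL ?_
    (hμ.eventually_mul_le two_pos hLα)
  filter_upwards [eventually_ge_atTop 0] with x hx
  rw [Real.mul_rpow two_pos.le hx, zero_mul, add_zero]

lemma isBigO_rpow_neg (hμ : RegVarTail μ α) {s : ℝ} (hs : 0 ≤ s) (hsα : s < α) :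
    (fun x => μ.real (Ioi x)) =O[atTop] fun x => x ^ (-s) := by
  obtain ⟨q, hαq, hqs⟩ := exists_between
    (Real.rpow_lt_rpow_of_exponent_lt one_lt_two (neg_lt_neg hsα))
  refine isBigO_of_dyadic_step (c := 0) ((antitone_measureReal_Ioi μ).antitoneOn _)
    (antitoneOn_rpow_neg hs) (fun x _ => measureReal_nonneg) (fun x (hx : 0 < x) => by positivity)
    ((by positivity : (0 : ℝ) ≤ 2 ^ (-α)).trans hαq.le) hqs ?_ ?_
  · filter_upwards [hμ.eventually_le_mul two_pos hαq] with x hx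
    simpa using hx
  · filter_upwards [eventually_ge_atTop 0] with x hx
    rw [Real.mul_rpow two_pos.le hx]

lemma integrable_rpow (hμ : RegVarTail μ α) (hsupp : ∀ᵐ t ∂μ, 0 ≤ t) {s : ℝ} (hs : 0 < s)
    (hsα : s < α) : Integrable (fun x => x ^ s) μ := by
  obtain ⟨r, hsr, hrα⟩ := exists_between hsα
  have htail0 : (fun x => μ.real (Ioi x)) =O[𝓝[>] 0] fun x => x ^ (-(0 : ℝ)) := by
    simp only [neg_zero, Real.rpow_zero]
    refine IsBigO.of_bound (μ.real univ) (.of_forall fun x => ?_)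
    rw [Real.norm_of_nonneg measureReal_nonneg, norm_one, mul_one]
    exact measureReal_mono (subset_univ _)
  have hmellin := mellin_convergent_of_isBigO_scalar
    ((antitone_measureReal_Ioi μ).locallyIntegrable.locallyIntegrableOn _)
    (hμ.isBigO_rpow_neg (hs.trans hsr).le hrα) hsr htail0 hs
  refine ⟨(measurable_id.pow_const s).aestronglyMeasurable, ?_⟩
  rw [hasFiniteIntegral_iff_ofReal (hsupp.mono fun t ht => Real.rpow_nonneg ht s),
    lintegral_rpow_eq_lintegral_meas_lt_mul μ hsupp aemeasurable_id hs]
  refine ENNReal.mul_lt_top ENNReal.ofReal_lt_top (lt_of_eq_of_lt ?_ hmellin.lintegral_lt_top)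
  refine setLIntegral_congr_fun measurableSet_Ioi fun x (hx : 0 < x) => ?_
  rw [mul_comm, ENNReal.ofReal_mul (Real.rpow_nonneg hx.le _), ofReal_measureReal]
  rfl

end RegVarTail

end RegularVariation

section UnitMomentAsymptotics

/-- The tail `τ(1/z, ∞)`, which measures the size of functions of `z` near `0`. -/
def invTail (τ : Measure ℝ) (z : ℝ) : ℝ := τ.real (Ioi z⁻¹)

lemma toUnit_half_le {s δ : ℝ} (hs : 0 ≤ s) (hsδ : s ≤ δ) :
    toUnit (s / 2) ≤ (1 + δ) / (2 + δ) * toUnit s := by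
  have hδ : 0 ≤ δ := hs.trans hsδ
  have hhalf : toUnit (s / 2) = (1 + s) / (2 + s) * toUnit s := by
    unfold toUnit; field_simp
  rw [hhalf]
  refine mul_le_mul_of_nonneg_right ?_ (toUnit_mem_Icc hs).1
  rw [div_le_div_iff₀ (by positivity) (by positivity)]
  linarith

lemma exists_pos_pow_lt_rpow_neg {α : ℝ} {k : ℕ} (hk : α < k) :
    ∃ δ > 0, ((1 + δ) / (2 + δ)) ^ k < (2 : ℝ) ^ (-α) := by
  have hcont : ContinuousAt (fun δ : ℝ => ((1 + δ) / (2 + δ)) ^ k) 0 :=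
    ((by fun_prop : ContinuousAt (fun δ : ℝ => 1 + δ) 0).div (by fun_prop) (by norm_num)).pow k
  have h0 : ((1 + 0) / (2 + 0)) ^ k < (2 : ℝ) ^ (-α) := by
    rw [add_zero, add_zero, one_div, inv_pow, ← Real.rpow_natCast, ← Real.rpow_neg two_pos.le]
    exact Real.rpow_lt_rpow_of_exponent_lt one_lt_two (neg_lt_neg hk)
  have hev : ∀ᶠ δ in 𝓝[>] (0 : ℝ), ((1 + δ) / (2 + δ)) ^ k < (2 : ℝ) ^ (-α) :=
    eventually_nhdsWithin_of_eventually_nhds (hcont.eventually_lt_const h0)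
  obtain ⟨δ, hlt, hδ⟩ := (hev.and self_mem_nhdsWithin).exists
  exact ⟨δ, hδ, hlt⟩

variable {τ : Measure ℝ}

lemma tendsto_coeff_scaledSeries (hτ : ∀ᵐ t ∂τ, 0 ≤ t) (hmean : Integrable (fun x => x) τ)
    (j : ℕ) : Tendsto (PowerSeries.coeff j (scaledSeries τ)) (𝓝[>] 0)
      (𝓝 ((-1) ^ j * ((∫ x, x ∂τ) * 0 ^ j))) := by
  have hcoeff : PowerSeries.coeff j (scaledSeries τ) =
      fun z => (-1) ^ j * ∫ t, t / (1 + z * t) * toUnit (z * t) ^ j ∂τ := by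
    funext z
    simp only [scaledSeries, resolventSeries, PowerSeries.coeff_rescale, PowerSeries.coeff_mk,
      resolventMoment, toUnit, Pi.mul_apply, Pi.pow_apply, id]
    rw [mul_left_comm, ← integral_const_mul]
    congr 2 with t
    ring
  rw [hcoeff, ← integral_mul_const]
  refine (tendsto_integral_filter_of_dominated_convergence (fun t => |t|)
    (.of_forall fun z => Measurable.aestronglyMeasurable ?_) ?_ hmean.abs ?_).const_mul _
  · unfold toUnit; fun_prop
  · filter_upwards [self_mem_nhdsWithin] with z (hz : 0 < z)
    filter_upwards [hτ] with t ht
    obtain ⟨h0, h1⟩ := toUnit_mem_Icc (mul_nonneg hz.le ht)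
    have hquot : t / (1 + z * t) ≤ t := div_le_self ht (by linarith [mul_nonneg hz.le ht])
    rw [norm_mul, norm_pow, Real.norm_of_nonneg h0, Real.norm_of_nonneg (by positivity),
      abs_of_nonneg ht]
    exact (mul_le_of_le_one_right (by positivity) (pow_le_one₀ h0 h1)).trans hquot
  · refine .of_forall fun t => ?_
    have hcont : ContinuousAt (fun z : ℝ => t / (1 + z * t) * toUnit (z * t) ^ j) 0 := by
      unfold toUnit
      exact (ContinuousAt.div (by fun_prop) (by fun_prop) (by simp)).mul
        ((ContinuousAt.div (by fun_prop) (by fun_prop) (by simp)).pow j)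
    simpa [toUnit] using hcont.tendsto.mono_left nhdsWithin_le_nhds

variable [IsFiniteMeasure τ]

lemma unitMoment_monotoneOn (hτ : ∀ᵐ t ∂τ, 0 ≤ t) (k : ℕ) :
    MonotoneOn (unitMoment τ k) (Ici 0) := by
  intro y hy z hz hyz
  rw [mem_Ici] at hy hz
  refine integral_mono_ae (integrable_comp_toUnit hτ (continuous_pow k) hy)
    (integrable_comp_toUnit hτ (continuous_pow k) hz) ?_
  filter_upwards [hτ] with t ht
  exact pow_le_pow_left₀ (toUnit_mem_Icc (by positivity)).1
    (toUnit_strictMonoOn.monotoneOn (mul_nonneg hy ht) (mul_nonneg hz ht) (by gcongr)) k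

lemma unitMoment_half_le (hτ : ∀ᵐ t ∂τ, 0 ≤ t) (k : ℕ) {z δ : ℝ} (hz : 0 < z) (hδ : 0 ≤ δ) :
    unitMoment τ k (z / 2) ≤
      ((1 + δ) / (2 + δ)) ^ k * unitMoment τ k z + τ.real (Ioi (δ / z)) := by
  have hint := (integrable_comp_toUnit hτ (continuous_pow k) hz.le).const_mul
    (((1 + δ) / (2 + δ)) ^ k)
  have hindicator : Integrable ((Ioi (δ / z)).indicator (1 : ℝ → ℝ)) τ :=
    (integrable_const 1).indicator measurableSet_Ioi
  rw [unitMoment, unitTransform, unitTransform, ← integral_const_mul,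
    ← integral_indicator_one measurableSet_Ioi, ← integral_add hint hindicator]
  refine integral_mono_ae (integrable_comp_toUnit hτ (continuous_pow k) (by positivity))
    (hint.add hindicator) ?_
  filter_upwards [hτ] with t ht
  have hzt : 0 ≤ z * t := by positivity
  rw [div_mul_eq_mul_div, ← mul_pow]
  rcases le_or_gt t (δ / z) with hle | hgt
  · rw [indicator_of_notMem (notMem_Ioi.2 hle), add_zero]
    exact pow_le_pow_left₀ (toUnit_mem_Icc (by positivity)).1
      (toUnit_half_le hzt (by rwa [mul_comm, ← le_div_iff₀ hz])) k
  · rw [indicator_of_mem (mem_Ioi.2 hgt), Pi.one_apply]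
    have hle_one : toUnit (z * t / 2) ^ k ≤ 1 :=
      pow_le_one₀ (toUnit_mem_Icc (by positivity)).1 (toUnit_mem_Icc (by positivity)).2
    have := (toUnit_mem_Icc hzt).1
    have : 0 ≤ ((1 + δ) / (2 + δ) * toUnit (z * t)) ^ k := by positivity
    linarith

lemma RegVarTail.unitMoment_isBigO {α : ℝ} (hreg : RegVarTail τ α) (hτ : ∀ᵐ t ∂τ, 0 ≤ t) {k : ℕ}
    (hk : α < k) : unitMoment τ k =O[𝓝[>] 0] invTail τ := by
  suffices h : (fun x => unitMoment τ k x⁻¹) =O[atTop] fun x => τ.real (Ioi x) by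
    simpa only [Function.comp_def, inv_inv] using! h.comp_tendsto tendsto_inv_nhdsGT_zero
  obtain ⟨δ, hδ, hδα⟩ := exists_pos_pow_lt_rpow_neg hk
  obtain ⟨L, hqL, hLα⟩ := exists_between hδα
  refine isBigO_of_dyadic_step (c := δ ^ (-α) + 1)
    (fun x hx y hy hxy => unitMoment_monotoneOn hτ k (mem_Ici.2 (inv_pos.2 hy).le)
      (mem_Ici.2 (inv_pos.2 hx).le) (inv_anti₀ hx hxy))
    ((antitone_measureReal_Ioi τ).antitoneOn _)
    (fun x hx => unitMoment_nonneg hτ k (inv_pos.2 hx).le)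
    (fun x hx => hreg.measureReal_Ioi_pos (le_of_lt hx)) (by positivity) hqL ?_
    (hreg.eventually_mul_le two_pos hLα)
  filter_upwards [eventually_gt_atTop 0, hreg.eventually_le_mul hδ (lt_add_one _)] with x hx htail
  have hhalf := unitMoment_half_le hτ k (inv_pos.2 hx) hδ.le
  rw [div_inv_eq_mul] at hhalf
  rw [mul_inv, ← div_eq_inv_mul]
  linarith

lemma unitMoment_isBigO_rpow (hτ : ∀ᵐ t ∂τ, 0 ≤ t) {s : ℝ} {k : ℕ} (hs : 0 ≤ s) (hsk : s ≤ k)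
    (hint : Integrable (fun x => x ^ s) τ) : unitMoment τ k =O[𝓝[>] 0] fun z => z ^ s := by
  refine IsBigO.of_bound (∫ x, x ^ s ∂τ) ?_
  filter_upwards [self_mem_nhdsWithin] with z (hz : 0 < z)
  rw [Real.norm_of_nonneg (unitMoment_nonneg hτ k hz.le), Real.norm_of_nonneg (by positivity),
    ← integral_mul_const]
  refine integral_mono_ae (integrable_comp_toUnit hτ (continuous_pow k) hz.le)
    (hint.mul_const _) ?_
  filter_upwards [hτ] with t ht
  have hzt : 0 ≤ z * t := by positivity
  obtain ⟨h0, h1⟩ := toUnit_mem_Icc hzt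
  calc toUnit (z * t) ^ k = toUnit (z * t) ^ (k : ℝ) := (Real.rpow_natCast _ k).symm
    _ ≤ toUnit (z * t) ^ s := Real.rpow_le_rpow_of_exponent_ge' h0 h1 hs hsk
    _ ≤ (z * t) ^ s := Real.rpow_le_rpow h0 (toUnit_le_self hzt) hs
    _ = t ^ s * z ^ s := by rw [Real.mul_rpow hz.le ht, mul_comm]

end UnitMomentAsymptotics

section Rpow

lemma rpow_isLittleO_rpow_nhdsGT_zero {a b : ℝ} (hab : a < b) :
    (fun z : ℝ => z ^ b) =o[𝓝[>] 0] fun z => z ^ a := by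
  have hlim : Tendsto (fun z : ℝ => z ^ (b - a)) (𝓝[>] 0) (𝓝 0) := by
    have hcont := (Real.continuousAt_rpow_const 0 (b - a) (.inr (sub_pos.2 hab).le)).tendsto
    rw [Real.zero_rpow (sub_pos.2 hab).ne'] at hcont
    exact hcont.mono_left nhdsWithin_le_nhds
  refine (isLittleO_iff_tendsto' ?_).2 (hlim.congr' ?_)
  · filter_upwards [self_mem_nhdsWithin] with z (hz : 0 < z) h
    exact absurd h (by positivity)
  · filter_upwards [self_mem_nhdsWithin] with z hz using Real.rpow_sub hz b a

lemma tendsto_rpow_nhdsGT_zero {r : ℝ} (hr : 0 < r) :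
    Tendsto (fun z : ℝ => z ^ r) (𝓝[>] 0) (𝓝 0) := by
  simpa [isLittleO_one_iff] using rpow_isLittleO_rpow_nhdsGT_zero hr

lemma rpow_mul_natCast_eventuallyEq (r : ℝ) (n : ℕ) :
    (fun z : ℝ => z ^ (r * n)) =ᶠ[𝓝[>] 0] (fun z => z ^ r) ^ n := by
  filter_upwards [self_mem_nhdsWithin] with z (hz : 0 < z)
  rw [Real.rpow_mul hz.le, Real.rpow_natCast, Pi.pow_apply]

lemma exists_lt_one_lt_sub_one_add_lt_mul {a p k : ℝ} (hp : a < p) (hk : a < k) :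
    ∃ r : ℝ, 0 < r ∧ r < 1 ∧ a < p - 1 + r ∧ a < r * k := by
  have hp' : ∀ᶠ r in 𝓝[<] (1 : ℝ), a < p - 1 + r := nhdsWithin_le_nhds <|
    (by fun_prop : ContinuousAt (fun r => p - 1 + r) 1).eventually_const_lt (by linarith)
  have hk' : ∀ᶠ r in 𝓝[<] (1 : ℝ), a < r * k := nhdsWithin_le_nhds <|
    (by fun_prop : ContinuousAt (fun r => r * k) 1).eventually_const_lt (by linarith)
  have h01 : ∀ᶠ r in 𝓝[<] (1 : ℝ), r ∈ Ioo 0 1 := Ioo_mem_nhdsLT one_pos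
  obtain ⟨r, ⟨hr0, hr1⟩, hrp, hrk⟩ := (h01.and (hp'.and hk')).exists
  exact ⟨r, hr0, hr1, hrp, hrk⟩

lemma integrable_rpow_of_le {τ : Measure ℝ} [IsFiniteMeasure τ] (hτ : ∀ᵐ t ∂τ, 0 ≤ t) {s p : ℝ}
    (hs : 0 ≤ s) (hsp : s ≤ p) (hp : Integrable (fun x => x ^ p) τ) :
    Integrable (fun x => x ^ s) τ := by
  refine ((integrable_const 1).add hp).mono' (by fun_prop) ?_
  filter_upwards [hτ] with t ht
  rw [Real.norm_of_nonneg (by positivity), Pi.add_apply]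
  rcases le_total t 1 with h1 | h1
  · linarith [Real.rpow_le_one ht h1 hs, Real.rpow_nonneg ht p]
  · linarith [Real.rpow_le_rpow_of_exponent_le h1 hsp]

end Rpow

section BooleanAsymptotics

variable {μ ν ρ : Measure ℝ}

lemma booleanKernel_mem_multiplierRing {φ θ : ℝ → ℝ} (hφ : Tendsto φ (𝓝[>] 0) (𝓝 0))
    (hθ : Tendsto θ (𝓝[>] 0) (𝓝 0)) (hid : id =O[𝓝[>] 0] φ)
    (hP : ∀ j, PowerSeries.coeff j (unitMomentSeries μ) ∈ mixedBigO (𝓝[>] 0) φ θ (j + 1))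
    (hp : scaledSeries ν ∈ multiplierRing (𝓝[>] 0) φ θ) :
    booleanKernel μ ν ∈ multiplierRing (𝓝[>] 0) φ θ := by
  have hP' := one_add_X_mul_mem_multiplierRing hφ hθ hP
  have hX := C_mul_one_add_X_mem_multiplierRing hφ hθ hid
  exact sub_mem (sub_mem (add_mem hP' (mul_mem hX hp)) (mul_mem hP' hp))
    (mul_mem hX (mul_mem hP' hp))

lemma tendsto_coeff_zero_booleanKernel {m : ℝ}
    (hP0 : Tendsto (PowerSeries.coeff 0 (unitMomentSeries μ)) (𝓝[>] 0) (𝓝 0))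
    (hp0 : Tendsto (PowerSeries.coeff 0 (scaledSeries ν)) (𝓝[>] 0) (𝓝 m)) :
    Tendsto (PowerSeries.coeff 0 (booleanKernel μ ν)) (𝓝[>] 0) (𝓝 0) := by
  have hid : Tendsto (fun z : ℝ => z) (𝓝[>] 0) (𝓝 0) := tendsto_id.mono_left nhdsWithin_le_nhds
  have hlim := ((hP0.add (hid.mul hp0)).sub (hP0.mul hp0)).sub (hid.mul (hP0.mul hp0))
  simp only [zero_mul, add_zero, sub_zero] at hlim
  refine hlim.congr fun z => ?_
  simp [booleanKernel]

variable [IsFiniteMeasure μ] {α r : ℝ}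

lemma tendsto_invTail : Tendsto (invTail μ) (𝓝[>] 0) (𝓝 0) :=
  (tendsto_measureReal_Ioi_atTop μ).comp tendsto_inv_nhdsGT_zero

lemma RegVarTail.rpow_isLittleO_invTail (hreg : RegVarTail μ α) (hα : 0 ≤ α) {s : ℝ}
    (hαs : α < s) : (fun z => z ^ s) =o[𝓝[>] 0] invTail μ := by
  obtain ⟨b, hαb, hbs⟩ := exists_between hαs
  refine (rpow_isLittleO_rpow_nhdsGT_zero hbs).trans_isBigO
    (((hreg.rpow_neg_isBigO (hα.trans hαb.le) hαb).comp_tendsto tendsto_inv_nhdsGT_zero).congr'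
      ?_ .rfl)
  filter_upwards [self_mem_nhdsWithin] with z (hz : 0 < z)
  rw [Function.comp_apply, Real.inv_rpow hz.le, Real.rpow_neg hz.le, inv_inv]

lemma RegVarTail.coeff_unitMomentSeries_mem_mixedBigO (hreg : RegVarTail μ α)
    (hμ : ∀ᵐ t ∂μ, 0 ≤ t) (hr0 : 0 < r) (hr1 : r < 1) (j : ℕ) :
    PowerSeries.coeff j (unitMomentSeries μ) ∈
      mixedBigO (𝓝[>] 0) (fun z => z ^ r) (invTail μ) (j + 1) := by
  rw [coeff_unitMomentSeries]
  refine Submodule.smul_mem _ _ ?_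
  rcases lt_or_ge α ((j + 1 : ℕ) : ℝ) with hj | hj
  · exact Submodule.mem_sup_right (hreg.unitMoment_isBigO hμ hj)
  · have hj0 : (0 : ℝ) < (j + 1 : ℕ) := by positivity
    have hrj : r * (j + 1 : ℕ) < (j + 1 : ℕ) := mul_lt_of_lt_one_left hj0 hr1
    exact Submodule.mem_sup_left ((unitMoment_isBigO_rpow hμ (by positivity) hrj.le
      (hreg.integrable_rpow hμ (by positivity) (hrj.trans_le hj))).congr' .rfl
      (rpow_mul_natCast_eventuallyEq r _))

variable [IsFiniteMeasure ν]

lemma coeff_scaledSeries_isBigO_rpow (hν : ∀ᵐ t ∂ν, 0 ≤ t) {s : ℝ} {j : ℕ} (hs : 0 ≤ s)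
    (hsj : s ≤ j + 1) (hint : Integrable (fun x => x ^ s) ν) :
    PowerSeries.coeff j (scaledSeries ν) =O[𝓝[>] 0] fun z => z ^ (s - 1) := by
  have hmoment := (unitMoment_isBigO_rpow hν hs (k := j + 1) (by exact_mod_cast hsj) hint)
  refine ((hmoment.const_mul_left ((-1) ^ j)).mul
    (isBigO_refl (fun z : ℝ => z⁻¹) (𝓝[>] 0))).congr' ?_ ?_
  all_goals filter_upwards [self_mem_nhdsWithin] with z (hz : 0 < z)
  · rw [← mul_coeff_scaledSeries, mul_comm z, mul_inv_cancel_right₀ hz.ne']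
  · rw [Real.rpow_sub_one hz.ne', div_eq_mul_inv]

lemma RegVarTail.scaledSeries_mem_multiplierRing {p : ℝ} (hreg : RegVarTail μ α) (hα : 0 ≤ α)
    (hν : ∀ᵐ t ∂ν, 0 ≤ t) (hmean : Integrable (fun x => x) ν)
    (hp : Integrable (fun x => x ^ p) ν) (hr0 : 0 < r) (hr1 : r < 1) (hαp : α < p - 1 + r) :
    scaledSeries ν ∈ multiplierRing (𝓝[>] 0) (fun z => z ^ r) (invTail μ) := by
  refine ⟨(tendsto_coeff_scaledSeries hν hmean 0).isBigO_one ℝ, fun j hj => ?_⟩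
  rcases le_or_gt ((j : ℝ) + 1) p with hjp | hjp
  · refine mem_orderRaising_of_mem_mixedBigO (tendsto_rpow_nhdsGT_zero hr0) tendsto_invTail hj
      (Submodule.mem_sup_left ?_)
    have hcoeff := coeff_scaledSeries_isBigO_rpow hν (by positivity) le_rfl
      (integrable_rpow_of_le hν (by positivity) hjp hp)
    have hrj : r * j < j + 1 - 1 := by
      rw [add_sub_cancel_right]
      exact mul_lt_of_lt_one_left (Nat.cast_pos.2 hj) hr1
    exact (hcoeff.trans (rpow_isLittleO_rpow_nhdsGT_zero hrj).isBigO).congr' .rfl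
      (rpow_mul_natCast_eventuallyEq r j)
  · refine mem_orderRaising_of_isLittleO (tendsto_rpow_nhdsGT_zero hr0) ?_ ?_ j
    · simpa [zero_pow (Nat.ne_of_gt hj)] using tendsto_coeff_scaledSeries hν hmean j
    · have hcoeff := coeff_scaledSeries_isBigO_rpow hν (by linarith) hjp.le hp
      refine (((isBigO_refl (fun z : ℝ => z ^ r) _).mul hcoeff).congr' .rfl ?_).trans_isLittleO
        (hreg.rpow_isLittleO_invTail hα hαp)
      filter_upwards [self_mem_nhdsWithin] with z (hz : 0 < z)
      rw [← Real.rpow_add hz, add_comm]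

variable [IsFiniteMeasure ρ]

theorem unitMoment_sub_smul_isLittleO_invTail {p : ℝ} (hα : 0 ≤ α) (hαp : α < p)
    (hreg : RegVarTail μ α) (hμ : ∀ᵐ t ∂μ, 0 ≤ t) (hν : ∀ᵐ t ∂ν, 0 ≤ t) (hρ : ∀ᵐ t ∂ρ, 0 ≤ t)
    (hmean : Integrable (fun x => x) ν) (hp : Integrable (fun x => x ^ p) ν)
    (hconv : IsBooleanConv μ ν ρ) {k : ℕ} (hk : α < k) :
    (unitMoment ρ k - (∫ x, x ∂ν) • unitMoment μ k) =o[𝓝[>] 0] invTail μ := by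
  obtain ⟨r, hr0, hr1, hrp, hrk⟩ := exists_lt_one_lt_sub_one_add_lt_mul hαp hk
  obtain ⟨j, rfl⟩ := Nat.exists_eq_add_one.2 (Nat.cast_pos.1 (hα.trans_lt hk))
  have hφ := tendsto_rpow_nhdsGT_zero hr0
  have hid : (id : ℝ → ℝ) =O[𝓝[>] 0] fun z => z ^ r := by
    simpa only [Real.rpow_one] using! (rpow_isLittleO_rpow_nhdsGT_zero hr1).isBigO
  have hP := hreg.coeff_unitMomentSeries_mem_mixedBigO hμ hr0 hr1
  have hpmem := hreg.scaledSeries_mem_multiplierRing hα hν hmean hp hr0 hr1 hrp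
  have hP0 := mem_littleO_one_iff.1 (mixedBigO_le_littleO_one hφ tendsto_invTail le_rfl (hP 0))
  have hp0 : Tendsto (PowerSeries.coeff 0 (scaledSeries ν)) (𝓝[>] 0) (𝓝 (∫ x, x ∂ν)) := by
    simpa using tendsto_coeff_scaledSeries hν hmean 0
  have hmem := coeff_sub_smul_mem_mixedLittleO hP hpmem
    (booleanKernel_mem_multiplierRing hφ tendsto_invTail hid hP hpmem) hp0
    (tendsto_coeff_zero_booleanKernel hP0 hp0)
    (fun i => eventually_nhdsWithin_of_forall (coeff_unitMomentSeries_eqOn hμ hν hρ hconv i)) j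
  have hφθ : ((fun z : ℝ => z ^ r) ^ (j + 1)) =o[𝓝[>] 0] invTail μ :=
    (hreg.rpow_isLittleO_invTail hα hrk).congr' (rpow_mul_natCast_eventuallyEq r _) .rfl
  have hsign := (isLittleO_of_mem_mixedLittleO hmem hφθ).const_smul_left ((-1 : ℝ) ^ j)
  rwa [coeff_unitMomentSeries, coeff_unitMomentSeries, smul_comm (∫ x, x ∂ν), ← smul_sub, smul_smul,
    ← mul_pow, neg_mul_neg, one_mul, one_pow, one_smul] at hsign

end BooleanAsymptotics

section Tauberian

lemma isLittleO_of_forall_exists_approx {ι : Type*} {l : Filter ι} {f θ : ι → ℝ}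
    (h : ∀ c > 0, ∃ g, g =o[l] θ ∧ ∀ᶠ x in l, ‖f x - g x‖ ≤ c * ‖θ x‖) : f =o[l] θ := by
  refine isLittleO_iff.2 fun c hc => ?_
  obtain ⟨g, hg, hfg⟩ := h (c / 2) (half_pos hc)
  filter_upwards [hfg, isLittleO_iff.1 hg (half_pos hc)] with x hfgx hgx
  calc ‖f x‖ ≤ ‖f x - g x‖ + ‖g x‖ := norm_le_norm_sub_add _ _
    _ ≤ c * ‖θ x‖ := by linarith

lemma unitTransform_pow_mul_polynomial {τ : Measure ℝ} [IsFiniteMeasure τ] (hτ : ∀ᵐ t ∂τ, 0 ≤ t)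
    (n : ℕ) (q : Polynomial ℝ) {z : ℝ} (hz : 0 ≤ z) :
    unitTransform τ (fun v => v ^ n * q.eval v) z =
      ∑ i ∈ Finset.range (q.natDegree + 1), q.coeff i * unitMoment τ (n + i) z := by
  simp only [unitTransform, ← integral_const_mul]
  rw [← integral_finsetSum _ fun i _ =>
    (integrable_comp_toUnit hτ (continuous_pow (n + i)) hz).const_mul _]
  congr 1 with t
  rw [Polynomial.eval_eq_sum_range, Finset.mul_sum]
  exact Finset.sum_congr rfl fun i _ => by ring

variable {μ ρ : Measure ℝ} [IsFiniteMeasure μ] [IsFiniteMeasure ρ] {m : ℝ} {n : ℕ} {θ : ℝ → ℝ}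
  (hμ : ∀ᵐ t ∂μ, 0 ≤ t) (hρ : ∀ᵐ t ∂ρ, 0 ≤ t)
  (hdiff : ∀ k ≥ n, (unitMoment ρ k - m • unitMoment μ k) =o[𝓝[>] 0] θ)
include hμ hρ hdiff

lemma unitTransform_pow_mul_polynomial_sub_smul_isLittleO (q : Polynomial ℝ) :
    (unitTransform ρ (fun v => v ^ n * q.eval v) - m • unitTransform μ fun v => v ^ n * q.eval v)
      =o[𝓝[>] 0] θ := by
  have hsum : (fun z => ∑ i ∈ Finset.range (q.natDegree + 1),
      q.coeff i * (unitMoment ρ (n + i) - m • unitMoment μ (n + i)) z) =o[𝓝[>] 0] θ :=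
    .fun_sum fun i _ => (hdiff (n + i) (n.le_add_right i)).const_mul_left _
  refine hsum.congr' ?_ .rfl
  filter_upwards [self_mem_nhdsWithin] with z (hz : 0 < z)
  simp only [Pi.sub_apply, Pi.smul_apply, smul_eq_mul,
    unitTransform_pow_mul_polynomial hμ n q hz.le, unitTransform_pow_mul_polynomial hρ n q hz.le,
    Finset.mul_sum, ← Finset.sum_sub_distrib]
  exact Finset.sum_congr rfl fun i _ => by ring

variable (hO : unitMoment μ n =O[𝓝[>] 0] θ)
include hO

lemma unitTransform_pow_mul_sub_smul_isLittleO {f : ℝ → ℝ} (hf : Continuous f) :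
    (unitTransform ρ (fun v => v ^ n * f v) - m • unitTransform μ fun v => v ^ n * f v)
      =o[𝓝[>] 0] θ := by
  have hOρ : unitMoment ρ n =O[𝓝[>] 0] θ := by
    simpa using (hdiff n le_rfl).isBigO.add (hO.const_smul_left m)
  obtain ⟨C, hC, hbound⟩ := (hOρ.norm_left.add (hO.norm_left.const_mul_left |m|)).exists_pos
  refine isLittleO_of_forall_exists_approx fun c hc => ?_
  obtain ⟨q, hq⟩ := exists_polynomial_near_of_continuousOn 0 1 f hf.continuousOn (c / C)
    (by positivity)
  refine ⟨_, unitTransform_pow_mul_polynomial_sub_smul_isLittleO hμ hρ hdiff q, ?_⟩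
  have hfq : ∀ v ∈ Icc (0 : ℝ) 1, |v ^ n * f v - v ^ n * q.eval v| ≤ c / C * v ^ n := by
    intro v hv
    rw [← mul_sub, abs_mul, abs_of_nonneg (pow_nonneg hv.1 n), mul_comm, abs_sub_comm]
    exact mul_le_mul_of_nonneg_right (hq v hv).le (pow_nonneg hv.1 n)
  have hcf : Continuous fun v => v ^ n * f v := by fun_prop
  have hcq : Continuous fun v => v ^ n * q.eval v := by fun_prop
  filter_upwards [self_mem_nhdsWithin, hbound.bound] with z (hz : 0 < z) hθ
  have hρz := abs_unitTransform_sub_le hρ hcf hcq hz.le hfq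
  have hμz := abs_unitTransform_sub_le hμ hcf hcq hz.le hfq
  simp only [Real.norm_eq_abs, abs_of_nonneg (unitMoment_nonneg hρ n hz.le),
    abs_of_nonneg (unitMoment_nonneg hμ n hz.le)] at hθ
  rw [Pi.sub_apply, Pi.sub_apply, sub_sub_sub_comm, Pi.smul_apply, Pi.smul_apply, ← smul_sub,
    Real.norm_eq_abs, Real.norm_eq_abs]
  calc _ ≤ c / C * unitMoment ρ n z + |m| * (c / C * unitMoment μ n z) := by
        refine (abs_sub _ _).trans (add_le_add hρz ?_)
        rw [smul_eq_mul, abs_mul]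
        gcongr
    _ = c / C * (unitMoment ρ n z + |m| * unitMoment μ n z) := by ring
    _ ≤ c / C * (C * |θ z|) := by
        gcongr
        exact (le_abs_self _).trans hθ
    _ = c * |θ z| := by rw [← mul_assoc, div_mul_cancel₀ _ hC.ne']

lemma unitTransform_sub_smul_isLittleO_of_eqOn_zero {f : ℝ → ℝ} (hf : Continuous f) {a : ℝ}
    (ha : 0 < a) (hfa : EqOn f 0 (Iic a)) :
    (unitTransform ρ f - m • unitTransform μ f) =o[𝓝[>] 0] θ := by
  have hquot : f = fun v => v ^ n * (f v / max v a ^ n) := by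
    funext v
    rcases le_or_gt v a with hv | hv
    · simp [hfa hv]
    · rw [max_eq_left hv.le, mul_div_cancel₀ _ (pow_pos (ha.trans hv) n).ne']
  rw [hquot]
  exact unitTransform_pow_mul_sub_smul_isLittleO hμ hρ hdiff hO
    (hf.div (by fun_prop) fun v => (pow_pos (lt_max_of_lt_right ha) n).ne')

end Tauberian

section TailComparison

variable {τ : Measure ℝ} [IsFiniteMeasure τ] {f : ℝ → ℝ} {c d z : ℝ}

lemma unitTransform_le_measureReal_Ioi (hτ : ∀ᵐ t ∂τ, 0 ≤ t) (hf : Continuous f)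
    (hf1 : ∀ v, f v ≤ 1) (hf0 : EqOn f 0 (Iic (toUnit c))) (hc : 0 ≤ c) (hz : 0 < z) :
    unitTransform τ f z ≤ τ.real (Ioi (c * z⁻¹)) := by
  rw [unitTransform, ← integral_indicator_one measurableSet_Ioi]
  refine integral_mono_ae (integrable_comp_toUnit hτ hf hz.le)
    ((integrable_const 1).indicator measurableSet_Ioi) ?_
  filter_upwards [hτ] with t ht
  rcases le_or_gt t (c * z⁻¹) with hle | hgt
  · have hzt : z * t ≤ c := by rwa [mul_comm, ← le_div_iff₀ hz, div_eq_mul_inv]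
    rw [indicator_of_notMem (notMem_Ioi.2 hle)]
    exact (hf0 (toUnit_strictMonoOn.monotoneOn (mul_nonneg hz.le ht) hc hzt)).le
  · rw [indicator_of_mem (mem_Ioi.2 hgt)]
    exact hf1 _

lemma measureReal_Ioi_le_unitTransform (hτ : ∀ᵐ t ∂τ, 0 ≤ t) (hf : Continuous f)
    (hf0 : ∀ v, 0 ≤ f v) (hf1 : EqOn f 1 (Ici (toUnit d))) (hd : 0 ≤ d) (hz : 0 < z) :
    τ.real (Ioi (d * z⁻¹)) ≤ unitTransform τ f z := by
  rw [unitTransform, ← integral_indicator_one measurableSet_Ioi]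
  refine integral_mono_ae ((integrable_const 1).indicator measurableSet_Ioi)
    (integrable_comp_toUnit hτ hf hz.le) ?_
  filter_upwards [hτ] with t ht
  by_cases hdt : t ∈ Ioi (d * z⁻¹)
  · have hzt : d ≤ z * t := by
      rw [mul_comm, ← div_le_iff₀ hz, div_eq_mul_inv]
      exact le_of_lt hdt
    rw [indicator_of_mem hdt]
    exact (hf1 (toUnit_strictMonoOn.monotoneOn hd (mul_nonneg hz.le ht) hzt)).ge
  · rw [indicator_of_notMem hdt]
    exact hf0 _

variable {μ ρ : Measure ℝ} [IsFiniteMeasure μ] {m α : ℝ}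

theorem RegVarTail.of_tendsto_measureReal_Ioi_div (hreg : RegVarTail μ α) (hm : m ≠ 0)
    (h : Tendsto (fun x => ρ.real (Ioi x) / μ.real (Ioi x)) atTop (𝓝 m)) : RegVarTail ρ α := by
  have hρpos : ∀ᶠ x in atTop, 0 < ρ.real (Ioi x) := by
    filter_upwards [h.eventually_ne hm] with x hx
    exact measureReal_nonneg.lt_of_ne' (div_ne_zero_iff.1 hx).1
  refine ⟨fun x _ => ?_, fun t ht => ?_⟩
  · obtain ⟨y, hy, hxy⟩ := (hρpos.and (eventually_ge_atTop x)).exists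
    exact (ENNReal.toReal_pos_iff.1 hy).1.trans_le (measure_mono (Ioi_subset_Ioi hxy))
  · have hlim := ((h.comp (tendsto_id.const_mul_atTop ht)).mul (hreg.2 t ht)).div h hm
    rw [mul_div_cancel_left₀ _ hm] at hlim
    refine hlim.congr' ?_
    filter_upwards [eventually_gt_atTop 0] with x hx
    have hμx := (hreg.measureReal_Ioi_pos hx.le).ne'
    have hμtx := (hreg.measureReal_Ioi_pos (mul_pos ht hx).le).ne'
    simp only [Pi.div_apply, Function.comp_apply, id, ← measureReal_def]
    field_simp

variable [IsFiniteMeasure ρ]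

lemma RegVarTail.exists_tendsto_zero_sandwich (hreg : RegVarTail μ α) (hμ : ∀ᵐ t ∂μ, 0 ≤ t)
    (hρ : ∀ᵐ t ∂ρ, 0 ≤ t) (hm : 0 ≤ m)
    (hdiff : ∀ k : ℕ, α < k → (unitMoment ρ k - m • unitMoment μ k) =o[𝓝[>] 0] invTail μ)
    (hc : 0 < c) (hcd : c < d) :
    ∃ r : ℝ → ℝ, Tendsto r atTop (𝓝 0) ∧ ∀ᶠ x in atTop,
      ρ.real (Ioi (d * x)) / μ.real (Ioi x) ≤ m * (μ.real (Ioi (c * x)) / μ.real (Ioi x)) + r x ∧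
      m * (μ.real (Ioi (d * x)) / μ.real (Ioi x)) + r x ≤
        ρ.real (Ioi (c * x)) / μ.real (Ioi x) := by
  have hd : 0 < d := hc.trans hcd
  obtain ⟨χ, hχ0, hχ1, hχ⟩ := exists_continuous_zero_one_of_isClosed
    (isClosed_Iic (a := toUnit c)) (isClosed_Ici (a := toUnit d))
    ((Iic_disjoint_Ici).2 (toUnit_strictMonoOn hc.le hd.le hcd).not_ge)
  obtain ⟨n, hn⟩ := exists_nat_gt α
  have hlim := (unitTransform_sub_smul_isLittleO_of_eqOn_zero hμ hρ
    (fun k hk => hdiff k (hn.trans_le (Nat.cast_le.2 hk))) (hreg.unitMoment_isBigO hμ hn)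
    χ.continuous (toUnit_pos hc) hχ0).tendsto_div_nhds_zero
  refine ⟨_, hlim.comp tendsto_inv_atTop_nhdsGT_zero, ?_⟩
  filter_upwards [eventually_gt_atTop 0] with x hx
  have hupper {τ : Measure ℝ} [IsFiniteMeasure τ] (hτ : ∀ᵐ t ∂τ, 0 ≤ t) :
      unitTransform τ χ x⁻¹ ≤ τ.real (Ioi (c * x)) := by
    simpa using unitTransform_le_measureReal_Ioi hτ χ.continuous (fun v => (hχ v).2) hχ0 hc.le
      (inv_pos.2 hx)
  have hlower {τ : Measure ℝ} [IsFiniteMeasure τ] (hτ : ∀ᵐ t ∂τ, 0 ≤ t) :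
      τ.real (Ioi (d * x)) ≤ unitTransform τ χ x⁻¹ := by
    simpa using measureReal_Ioi_le_unitTransform hτ χ.continuous (fun v => (hχ v).1) hχ1 hd.le
      (inv_pos.2 hx)
  simp only [Function.comp_apply, invTail, inv_inv, Pi.sub_apply, Pi.smul_apply, smul_eq_mul,
    ← mul_div_assoc, ← add_div]
  constructor <;> gcongr
  · linarith [hlower hρ, mul_le_mul_of_nonneg_left (hupper hμ) hm]
  · linarith [hupper hρ, mul_le_mul_of_nonneg_left (hlower hμ) hm]

theorem RegVarTail.tendsto_measureReal_Ioi_div (hreg : RegVarTail μ α) (hμ : ∀ᵐ t ∂μ, 0 ≤ t)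
    (hρ : ∀ᵐ t ∂ρ, 0 ≤ t) (hm : 0 ≤ m)
    (hdiff : ∀ k : ℕ, α < k → (unitMoment ρ k - m • unitMoment μ k) =o[𝓝[>] 0] invTail μ) :
    Tendsto (fun x => ρ.real (Ioi x) / μ.real (Ioi x)) atTop (𝓝 m) := by
  have hcont : Tendsto (fun c : ℝ => m * c ^ (-α)) (𝓝 1) (𝓝 m) := by
    simpa using ((Real.continuousAt_rpow_const 1 (-α) (.inl one_ne_zero)).const_mul m).tendsto
  refine tendsto_order.2 ⟨fun a ha => ?_, fun a ha => ?_⟩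
  · have hev : ∀ᶠ d in 𝓝[>] (1 : ℝ), a < m * d ^ (-α) :=
      nhdsWithin_le_nhds (hcont.eventually_const_lt ha)
    obtain ⟨d, had, hd : 1 < d⟩ := (hev.and self_mem_nhdsWithin).exists
    obtain ⟨r, hr, hsandwich⟩ := hreg.exists_tendsto_zero_sandwich hμ hρ hm hdiff one_pos hd
    have hlim := ((hreg.2 d (one_pos.trans hd)).const_mul m).add hr
    rw [add_zero] at hlim
    filter_upwards [hsandwich, hlim.eventually_const_lt had] with x hx hax
    exact hax.trans_le (by simpa using! hx.2)
  · have hev : ∀ᶠ c in 𝓝[<] (1 : ℝ), m * c ^ (-α) < a :=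
      nhdsWithin_le_nhds (hcont.eventually_lt_const ha)
    obtain ⟨c, hca, hc0, hc1⟩ := (hev.and (Ioo_mem_nhdsLT one_pos)).exists
    obtain ⟨r, hr, hsandwich⟩ := hreg.exists_tendsto_zero_sandwich hμ hρ hm hdiff hc0 hc1
    have hlim := ((hreg.2 c hc0).const_mul m).add hr
    rw [add_zero] at hlim
    filter_upwards [hsandwich, hlim.eventually_lt_const hca] with x hx hax
    exact lt_of_le_of_lt (by simpa using! hx.1) hax

end TailComparison

theorem boolean_breiman_dominated_general (α p : ℝ) (hα : 0 ≤ α) (hαp : α < p) (μ ν ρ : Measure ℝ)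
    [IsProbabilityMeasure μ] [IsProbabilityMeasure ν] [IsProbabilityMeasure ρ]
    (hsuppμ : μ (Iio 0) = 0) (hsuppν : ν (Iio 0) = 0) (hsuppρ : ρ (Iio 0) = 0)
    (hregμ : RegVarTail μ α) (hνpos : 0 < ν (Ioi 0)) (hmean : Integrable (fun x => x) ν)
    (hp : Integrable (fun x => x ^ p) ν)
    (hB : ∀ z : ℂ, offHalfLine z → Btrans ρ z = Btrans μ z * Btrans ν z) :
    RegVarTail ρ α ∧
    Tendsto (fun y => (ρ (Ioi y)).toReal / ((∫ x, x ∂ν) * (μ (Ioi y)).toReal)) atTop (𝓝 1) := by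
  have hμ := ae_nonneg_of_measure_Iio_eq_zero hsuppμ
  have hν := ae_nonneg_of_measure_Iio_eq_zero hsuppν
  have hρ := ae_nonneg_of_measure_Iio_eq_zero hsuppρ
  have hm := integral_id_pos hν hνpos hmean
  have hconv := isBooleanConv_of_Btrans hμ hν (hregμ.1 0 le_rfl) hνpos hB
  have htail := hregμ.tendsto_measureReal_Ioi_div hμ hρ hm.le fun _ =>
    unitMoment_sub_smul_isLittleO_invTail hα hαp hregμ hμ hν hρ hmean hp hconv
  refine ⟨hregμ.of_tendsto_measureReal_Ioi_div hm.ne' htail, ?_⟩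
  have hratio := htail.div_const (∫ x, x ∂ν)
  rw [div_self hm.ne'] at hratio
  refine hratio.congr fun y => ?_
  rw [div_div, mul_comm, measureReal_def, measureReal_def]

/-- Boolean Breiman theorem, dominated case. -/
theorem boolean_breiman_dominated
    (α β : ℝ) (hα : 0 ≤ α) (hαβ : α < β)
    (μ ν ρ : Measure ℝ)
    [IsProbabilityMeasure μ] [IsProbabilityMeasure ν] [IsProbabilityMeasure ρ]
    (hsuppμ : μ (Set.Iio (0 : ℝ)) = 0) (hsuppν : ν (Set.Iio (0 : ℝ)) = 0)
    (hsuppρ : ρ (Set.Iio (0 : ℝ)) = 0)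
    (hregμ : RegVarTail μ α) (hregν : RegVarTail ν β)
    (hmean : Integrable (fun x : ℝ => x) ν)
    (hB : ∀ z : ℂ, offHalfLine z → Btrans ρ z = Btrans μ z * Btrans ν z) :
    RegVarTail ρ α ∧
    Filter.Tendsto
      (fun y : ℝ => (ρ (Set.Ioi y)).toReal / ((∫ x, x ∂ν) * (μ (Set.Ioi y)).toReal))
      Filter.atTop (nhds 1) := by
  obtain ⟨p, hαp, hpβ⟩ := exists_between hαβ
  exact boolean_breiman_dominated_general α p hα hαp μ ν ρ hsuppμ hsuppν hsuppρ hregμ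
    (hregν.1 0 le_rfl) hmean (hregν.integrable_rpow (ae_nonneg_of_measure_Iio_eq_zero hsuppν)
      (hα.trans_lt hαp) hpβ) hB
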